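/- Tube scalars commute with the c-product: for every tube a ∈ ℝ^{1×1×n3}, every A ∈ ℝ^{n1×n2×n3} and every B ∈ ℝ^{n2×m×n3}, one has A ⋆_c (a ⊛ B) = a ⊛ (A ⋆_c B) = (a ⊛ A) ⋆_c B. -/

import Mathlib

open Matrix BigOperators Kronecker

noncomputable section

/-- The `n × n` discrete cosine transform (DCT) matrix, with 0-based indexing of the 1-based
formula `(C_n)_{ij} = √((2−δ_{i1})/n)·cos((i−1)(2j−1)π/(2n))`. -/
def dctMatrix (n : ℕ) : Matrix (Fin n) (Fin n) ℝ :=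
  Matrix.of fun i j =>
    Real.sqrt ((2 - if (i : ℕ) = 0 then 1 else 0) / n) *
      Real.cos ((i : ℝ) * (2 * (j : ℝ) + 1) * Real.pi / (2 * n))

/-- The `n × n` upshift matrix `Z`, with ones on the first superdiagonal. -/
def upshift (n : ℕ) : Matrix (Fin n) (Fin n) ℝ :=
  Matrix.of fun i j => if (i : ℕ) + 1 = (j : ℕ) then 1 else 0

/-- `W = diag(C_n(:,1))`, the diagonal matrix whose diagonal is the first column of the DCT
matrix. -/
def Wdiag (n : ℕ) : Matrix (Fin n) (Fin n) ℝ :=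
  Matrix.diagonal fun i => dctMatrix n i ⟨0, i.pos⟩

/-- The `n × n` transform matrix `M = W⁻¹ C_n (I + Z)`. -/
def transformM (n : ℕ) : Matrix (Fin n) (Fin n) ℝ :=
  (Wdiag n)⁻¹ * dctMatrix n * (1 + upshift n)

/-- The Hankel part `H_{p,q}` of the `(p,q)` block of `mat(A)` (0-based indices:
the 1-based conditions `p+q ≤ n3`, `p+q = n3+1`, `p+q ≥ n3+2` become
`p+q+1 < n3`, `p+q+1 = n3` and `p+q+1 > n3`, with blocks `A^{(p+q+1)}` resp. `0`
resp. `A^{(2·n3−(p+q)−1)}` in 0-based numbering of the slices). -/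
def hankelPart {n1 n2 n3 : ℕ} (A : Fin n3 → Matrix (Fin n1) (Fin n2) ℝ) (p q : Fin n3) :
    Matrix (Fin n1) (Fin n2) ℝ :=
  if h : p.val + q.val + 1 < n3 then A ⟨p.val + q.val + 1, h⟩
  else if h' : p.val + q.val + 1 = n3 then 0
  else A ⟨2 * n3 - (p.val + q.val) - 1, by
    have hp := p.isLt; have hq := q.isLt; omega⟩

/-- `mat(A)`: the block Toeplitz-plus-Hankel matrix associated with a third-order tensor `A`,
identified with the tuple of its frontal slices.  Rows are indexed by `Fin n3 × Fin n1`
(block row, row within block) and columns by `Fin n3 × Fin n2`. -/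
def tmat {n1 n2 n3 : ℕ} (A : Fin n3 → Matrix (Fin n1) (Fin n2) ℝ) :
    Matrix (Fin n3 × Fin n1) (Fin n3 × Fin n2) ℝ :=
  Matrix.of fun pi qj =>
    (A ⟨Nat.dist pi.1.val qj.1.val, by
        have hp := pi.1.isLt; have hq := qj.1.isLt
        simp only [Nat.dist]; omega⟩ + hankelPart A pi.1 qj.1) pi.2 qj.2

/-- The `p`-th transformed slice `Ã^{(p)} = Σ_q M_{pq} A^{(q)}` of a tensor `A`. -/
def tSlice {n1 n2 n3 : ℕ} (A : Fin n3 → Matrix (Fin n1) (Fin n2) ℝ) (p : Fin n3) :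
    Matrix (Fin n1) (Fin n2) ℝ :=
  ∑ q, transformM n3 p q • A q

/-- Toeplitz-plus-Hankel matrix `th(v)` of a vector `v ∈ ℝⁿ` (0-based indexing of the 1-based
formula of the paper). -/
def thMat {n : ℕ} (v : Fin n → ℝ) : Matrix (Fin n) (Fin n) ℝ :=
  Matrix.of fun p q =>
    v ⟨Nat.dist p.val q.val, by
        have hp := p.isLt; have hq := q.isLt; simp only [Nat.dist]; omega⟩ +
    (if h : p.val + q.val + 1 < n then v ⟨p.val + q.val + 1, h⟩
     else if h' : p.val + q.val + 1 = n then 0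
     else v ⟨2 * n - (p.val + q.val) - 1, by
       have hp := p.isLt; have hq := q.isLt; omega⟩)

/-- The product `a ⊛ B` of a tube `a ∈ ℝ^{1×1×n3}` (identified with a vector of `ℝ^{n3}`) with a
tensor `B`: the tensor whose transformed slices are `(a ⊛ B)~^{(p)} = (M a)_p • B̃^{(p)}`. -/
def tubeSMul {n1 n2 n3 : ℕ} (a : Fin n3 → ℝ) (B : Fin n3 → Matrix (Fin n1) (Fin n2) ℝ) :
    Fin n3 → Matrix (Fin n1) (Fin n2) ℝ :=
  fun t => ∑ p, (transformM n3)⁻¹ t p • ((transformM n3).mulVec a p • tSlice B p)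

/-- The c-product `a ⋆_c b` of two tubes: the tube whose transform is the componentwise product
of the transforms, `M (a ⋆_c b) = (M a) .* (M b)`. -/
def tubeCMul {n3 : ℕ} (a b : Fin n3 → ℝ) : Fin n3 → ℝ :=
  (transformM n3)⁻¹.mulVec fun p => (transformM n3).mulVec a p * (transformM n3).mulVec b p

/-- Frobenius norm of a real matrix. -/
def frobNorm {m n : ℕ} (B : Matrix (Fin m) (Fin n) ℝ) : ℝ :=
  Real.sqrt (∑ i, ∑ j, (B i j) ^ 2)

/-- Frobenius norm of a third-order tensor. -/
def tFrobNorm {n1 n2 n3 : ℕ} (A : Fin n3 → Matrix (Fin n1) (Fin n2) ℝ) : ℝ :=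
  Real.sqrt (∑ k, ∑ i, ∑ j, (A k i j) ^ 2)

/-- The `i`-th lateral slice `U(:,i,:)` of a tensor `U`: the `n1 × 1 × n3` tensor whose `k`-th
frontal slice is the `i`-th column of `U^{(k)}`. -/
def lateralSlice {n1 n2 n3 : ℕ} (U : Fin n3 → Matrix (Fin n1) (Fin n2) ℝ) (i : Fin n2) :
    Fin n3 → Matrix (Fin n1) (Fin 1) ℝ :=
  fun k => Matrix.of fun r _ => U k r i

/-- The `(i,j)` tube `S(i,j,:)` of a tensor `S`: the `1 × 1 × n3` tensor whose `k`-th frontal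
slice is the `(i,j)` entry of `S^{(k)}`. -/
def entryTube {n1 n2 n3 : ℕ} (S : Fin n3 → Matrix (Fin n1) (Fin n2) ℝ) (i : Fin n1) (j : Fin n2) :
    Fin n3 → Matrix (Fin 1) (Fin 1) ℝ :=
  fun k => Matrix.of fun _ _ => S k i j

/-- Slicewise transpose of a tensor. -/
def sTranspose {n1 n2 n3 : ℕ} (A : Fin n3 → Matrix (Fin n1) (Fin n2) ℝ) :
    Fin n3 → Matrix (Fin n2) (Fin n1) ℝ :=
  fun k => (A k)ᵀ

/-- `TVect(A)`: stacking the lateral slices of `A` one below the other; the `k`-th frontal slice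
of `TVect(A)` is obtained by stacking the columns of `A^{(k)}` (entry `r = j·n1 + i` is
`A^{(k)}_{i,j}`). -/
def tvect {n1 n2 n3 : ℕ} (A : Fin n3 → Matrix (Fin n1) (Fin n2) ℝ) :
    Fin n3 → Matrix (Fin (n1 * n2)) (Fin 1) ℝ :=
  fun k => Matrix.of fun r _ =>
    A k ⟨r.val % n1, Nat.mod_lt _ (Nat.pos_of_ne_zero fun h0 => absurd r.isLt (by simp [h0]))⟩
        ⟨r.val / n1, Nat.div_lt_of_lt_mul r.isLt⟩

/-!
In the transformed domain the c-product is the slicewise matrix product and `a ⊛ ·` scales the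
`p`-th slice by `(Ma)_p`, so the theorem is the fact that scalars commute with matrix products.

The passage to the transformed domain rests on `C th(v) = diag(Mv) C` with `C` invertible. Extend
`v` to an even `2n`-periodic function on `ℤ`. The rows of `C` are cosine waves that are
`2n`-periodic and even about `-1/2`; pairing them with `th(v)` unfolds the Toeplitz and Hankel parts
into one convolution over a full period, and convolution with an even function multiplies a cosine
wave by a scalar. Comparing first columns identifies that scalar as `(Mv)_k`. Finally `C` is, up to
row scaling, the evaluation of the Chebyshev polynomials `T_0, …, T_{n-1}` at `n` distinct points,
hence invertible.
-/

section PeriodicSums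

variable {M : Type*} [AddCommMonoid M] {f : ℤ → M}

theorem sum_range_add_of_periodic {N : ℕ} (hf : Function.Periodic f N) (a : ℤ) :
    ∑ x ∈ Finset.range N, f (x + a) = ∑ x ∈ Finset.range N, f x := by
  have shift_one (b : ℤ) :
      ∑ x ∈ Finset.range N, f (x + (b + 1)) = ∑ x ∈ Finset.range N, f (x + b) := by
    cases N with
    | zero => rfl
    | succ m =>
      rw [Finset.sum_range_succ, Finset.sum_range_succ']
      congr 1
      · exact Finset.sum_congr rfl fun x _ => by congr 1; push_cast; ring
      · rw [← hf (_ + b)]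
        congr 1
        push_cast
        ring
  induction a with
  | zero => simp only [add_zero]
  | succ b ih => rw [shift_one, ih]
  | pred b ih => rw [← shift_one, sub_add_cancel, ih]

theorem sum_range_neg_of_periodic {N : ℕ} (hf : Function.Periodic f N) :
    ∑ x ∈ Finset.range N, f (-x) = ∑ x ∈ Finset.range N, f x := by
  have hneg : Function.Periodic (fun x => f (-x)) N := fun x => by
    simp only [neg_add, ← sub_eq_add_neg, hf.sub_eq]
  rw [← sum_range_add_of_periodic hneg 1, ← Finset.sum_range_reflect]
  refine Finset.sum_congr rfl fun x hx => ?_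
  have hxN : x < N := Finset.mem_range.mp hx
  rw [← hf]
  congr 1
  omega

theorem sum_range_two_mul_of_periodic {n : ℕ} (hf : Function.Periodic f (2 * n : ℕ)) :
    ∑ x ∈ Finset.range (2 * n), f x = ∑ p : Fin n, (f p + f (-1 - p)) := by
  rw [Fin.sum_univ_eq_sum_range fun p : ℕ => f p + f (-1 - p), two_mul, Finset.sum_range_add,
    Finset.sum_add_distrib, ← Finset.sum_range_reflect fun x => f (n + x : ℕ)]
  congr 1
  refine Finset.sum_congr rfl fun x hx => ?_
  have hxn : x < n := Finset.mem_range.mp hx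
  rw [← hf (-1 - x)]
  congr 1
  omega

end PeriodicSums

theorem natAbs_valMinAbs_intCast {N : ℕ} [NeZero N] {x : ℤ} (hx : 2 * x.natAbs ≤ N) :
    (x : ZMod N).valMinAbs.natAbs = x.natAbs := by
  rcases Int.natAbs_eq x with h | h <;> rw [h]
  · rw [Int.cast_natCast, (ZMod.valMinAbs_natCast_eq_self).mpr (by omega)]
  · rw [Int.cast_neg, ZMod.natAbs_valMinAbs_neg, Int.cast_natCast,
      (ZMod.valMinAbs_natCast_eq_self).mpr (by omega), Int.natAbs_neg]

theorem isUnit_eval_polynomialSequence {K : Type*} [Field K] (S : Polynomial.Sequence K) {n : ℕ}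
    {x : Fin n → K} (hx : Function.Injective x) :
    IsUnit (Matrix.of fun i j : Fin n => (S i).eval (x j)) := by
  rw [← linearIndependent_rows_iff_isUnit, Fintype.linearIndependent_iff]
  intro w hw
  have hzero : ∑ i : Fin n, w i • S i = 0 := by
    refine Polynomial.eq_zero_of_degree_lt_of_eval_index_eq_zero Finset.univ hx.injOn ?_ ?_
    · rw [Finset.card_univ, Fintype.card_fin, ← Polynomial.mem_degreeLT]
      refine Submodule.sum_mem _ fun i _ => Submodule.smul_mem _ _ ?_
      rw [Polynomial.mem_degreeLT, S.degree_eq]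
      exact_mod_cast i.isLt
    · intro j _
      simpa [Polynomial.eval_finsetSum] using congrFun hw j
  exact Fintype.linearIndependent_iff.mp
    (S.linearIndependent.comp _ Fin.val_injective) w hzero

section EvenExtension

variable {α : Type*} [Zero α] {n : ℕ} (v : Fin n → α)

/-- The even, `2n`-periodic extension of `v` to `ℤ`, set to `0` at the odd multiples of `n`. Its
Toeplitz and Hankel matrices add up to `thMat v`; reducing modulo `2n` to the representative of
least absolute value encodes both symmetries at once. -/
def evenExt (x : ℤ) : α :=
  if h : (x : ZMod (2 * n)).valMinAbs.natAbs < n then v ⟨_, h⟩ else 0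

theorem evenExt_periodic : Function.Periodic (evenExt v) (2 * n : ℕ) := fun x => by
  simp only [evenExt, Int.cast_add, Int.cast_natCast, ZMod.natCast_self, add_zero]

theorem evenExt_neg (x : ℤ) : evenExt v (-x) = evenExt v x := by
  simp only [evenExt, Int.cast_neg, ZMod.natAbs_valMinAbs_neg]

theorem evenExt_of_natAbs_eq {x : ℤ} {j : Fin n} (h : x.natAbs = j) : evenExt v x = v j := by
  have : NeZero (2 * n) := ⟨by have := j.pos; omega⟩
  have hx : (x : ZMod (2 * n)).valMinAbs.natAbs = j := by
    rw [natAbs_valMinAbs_intCast (by omega), h]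
  simp only [evenExt, hx, j.isLt, dite_true]

theorem evenExt_natCast_self : evenExt v n = 0 := by
  rcases Nat.eq_zero_or_pos n with rfl | hn
  · exact dif_neg (Nat.not_lt_zero _)
  have : NeZero (2 * n) := ⟨by omega⟩
  rw [evenExt, dif_neg]
  rw [natAbs_valMinAbs_intCast (by omega), Int.natAbs_natCast]
  exact lt_irrefl n

end EvenExtension

section ThMat

variable {n : ℕ} (v : Fin n → ℝ)

theorem thMat_eq_evenExt (p q : Fin n) :
    thMat v p q = evenExt v (p - q) + evenExt v (p + q + 1) := by
  rw [thMat, Matrix.of_apply]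
  congr 1
  · refine (evenExt_of_natAbs_eq v ?_).symm
    simp only [Nat.dist]
    omega
  · split_ifs with hlt heq
    · exact (evenExt_of_natAbs_eq v (by simp only; omega)).symm
    · rw [← evenExt_natCast_self v]
      congr 1
      omega
    · rw [← (evenExt_periodic v).sub_eq]
      exact (evenExt_of_natAbs_eq v (by simp only; omega)).symm

theorem one_add_upshift_mulVec (p : Fin n) :
    ((1 + upshift n) *ᵥ v) p = thMat v p ⟨0, p.pos⟩ := by
  have upshift_mulVec : (upshift n *ᵥ v) p = if h : p.val + 1 < n then v ⟨p + 1, h⟩ else 0 := by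
    simp only [upshift, mulVec, dotProduct, of_apply, ite_mul, one_mul, zero_mul]
    split_ifs with h
    · rw [Finset.sum_eq_single_of_mem ⟨p + 1, h⟩ (Finset.mem_univ _)]
      · exact if_pos rfl
      · exact fun j _ hj => if_neg fun hpj => hj (Fin.ext hpj.symm)
    · exact Finset.sum_eq_zero fun j _ => if_neg (by omega)
  rw [add_mulVec, one_mulVec, Pi.add_apply, upshift_mulVec, thMat, of_apply]
  congr 1
  · congr 1
    simp [Nat.dist]
  · simp only [add_zero]
    split_ifs <;> first | rfl | omega

end ThMat

section CosWave

/-- The `k`-th cosine wave of period `2n`, even about `-1/2`. Up to normalization its values at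
`0, …, n - 1` are the `k`-th row of the DCT matrix. -/
def cosWave (n k : ℕ) (x : ℤ) : ℝ :=
  Real.cos (k * (2 * x + 1) * Real.pi / (2 * n))

variable {n : ℕ} (k : ℕ)

theorem cosWave_periodic (hn : n ≠ 0) : Function.Periodic (cosWave n k) (2 * n : ℕ) := fun x => by
  rw [cosWave, cosWave, ← Real.cos_add_nat_mul_two_pi (k * (2 * x + 1) * Real.pi / (2 * n)) k]
  congr 1
  push_cast
  field

theorem cosWave_neg_one_sub (x : ℤ) : cosWave n k (-1 - x) = cosWave n k x := by
  rw [cosWave, cosWave, ← Real.cos_neg]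
  congr 1
  push_cast
  ring

theorem cosWave_add_add_cosWave_sub (x y : ℤ) :
    cosWave n k (x + y) + cosWave n k (x - y) =
      2 * Real.cos (k * y * Real.pi / n) * cosWave n k x := by
  have hsub : k * (2 * ((x - y : ℤ) : ℝ) + 1) * Real.pi / (2 * n) =
      k * (2 * x + 1) * Real.pi / (2 * n) - k * y * Real.pi / n := by push_cast; ring
  have hadd : k * (2 * ((x + y : ℤ) : ℝ) + 1) * Real.pi / (2 * n) =
      k * (2 * x + 1) * Real.pi / (2 * n) + k * y * Real.pi / n := by push_cast; ring
  rw [cosWave, cosWave, cosWave, hadd, hsub, Real.cos_add, Real.cos_sub]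
  ring

theorem cosWave_zero_pos {k : ℕ} (hk : k < n) : 0 < cosWave n k 0 := by
  have hkn : (k : ℝ) < n := Nat.cast_lt.mpr hk
  have hn : (0 : ℝ) < n := k.cast_nonneg.trans_lt hkn
  refine Real.cos_pos_of_mem_Ioo ⟨?_, ?_⟩
  · have : 0 ≤ k * (2 * ((0 : ℤ) : ℝ) + 1) * Real.pi / (2 * n) := by positivity
    linarith [Real.pi_pos]
  · rw [Int.cast_zero, div_lt_div_iff₀ (by positivity) two_pos]
    nlinarith [Real.pi_pos]

theorem sum_cosWave_mul_thMat_eq_sum_range (v : Fin n → ℝ) (q : Fin n) :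
    ∑ p : Fin n, cosWave n k p * thMat v p q =
      ∑ x ∈ Finset.range (2 * n), cosWave n k (q + x) * evenExt v x := by
  have hn : n ≠ 0 := q.pos.ne'
  have hper : Function.Periodic (fun x => cosWave n k x * evenExt v (x - q)) (2 * n : ℕ) :=
    (cosWave_periodic k hn).mul ((evenExt_periodic v).sub_const _)
  calc ∑ p : Fin n, cosWave n k p * thMat v p q
    _ = ∑ p : Fin n, (cosWave n k p * evenExt v (p - q) +
          cosWave n k (-1 - p) * evenExt v (-1 - p - q)) := by
      refine Finset.sum_congr rfl fun p _ => ?_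
      rw [thMat_eq_evenExt, mul_add, cosWave_neg_one_sub, ← evenExt_neg v (-1 - p - q)]
      ring_nf
    _ = ∑ x ∈ Finset.range (2 * n), cosWave n k x * evenExt v (x - q) :=
      (sum_range_two_mul_of_periodic hper).symm
    _ = ∑ x ∈ Finset.range (2 * n), cosWave n k (q + x) * evenExt v x := by
      rw [← sum_range_add_of_periodic hper q]
      simp only [add_sub_cancel_right, add_comm]

theorem sum_cosWave_mul_thMat (v : Fin n → ℝ) (q : Fin n) :
    ∑ p : Fin n, cosWave n k p * thMat v p q =
      (∑ x ∈ Finset.range (2 * n), Real.cos (k * x * Real.pi / n) * evenExt v x) *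
        cosWave n k q := by
  have hn : n ≠ 0 := q.pos.ne'
  have hper : Function.Periodic (fun x => cosWave n k (q + x) * evenExt v x) (2 * n : ℕ) :=
    ((cosWave_periodic k hn).const_add _).mul (evenExt_periodic v)
  have hreflect : ∑ x ∈ Finset.range (2 * n), cosWave n k (q - x) * evenExt v x =
      ∑ x ∈ Finset.range (2 * n), cosWave n k (q + x) * evenExt v x := by
    simpa only [← sub_eq_add_neg, evenExt_neg] using sum_range_neg_of_periodic hper
  have hdouble : ∑ x ∈ Finset.range (2 * n), (cosWave n k (q + x) + cosWave n k (q - x)) *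
      evenExt v x = 2 * ∑ x ∈ Finset.range (2 * n), cosWave n k (q + x) * evenExt v x := by
    simp only [add_mul, Finset.sum_add_distrib, hreflect]
    exact (two_mul _).symm
  rw [sum_cosWave_mul_thMat_eq_sum_range, Finset.sum_mul]
  refine mul_left_cancel₀ two_ne_zero (hdouble.symm.trans ?_)
  rw [Finset.mul_sum]
  refine Finset.sum_congr rfl fun x _ => ?_
  rw [cosWave_add_add_cosWave_sub, Int.cast_natCast]
  ring

end CosWave

section Transform

variable {n : ℕ}

theorem injective_cos_odd_mul_pi_div :
    Function.Injective fun p : Fin n => Real.cos ((2 * p + 1) * Real.pi / (2 * n)) := by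
  intro p q hpq
  have hmem (r : Fin n) : (2 * r + 1) * Real.pi / (2 * n) ∈ Set.Icc 0 Real.pi := by
    have hr : (r : ℝ) + 1 ≤ n := by exact_mod_cast r.isLt
    have hn : (0 : ℝ) < n := Nat.cast_pos.mpr r.pos
    refine ⟨by positivity, ?_⟩
    rw [div_le_iff₀ (by positivity)]
    nlinarith [Real.pi_pos]
  have hangle := Real.injOn_cos (hmem p) (hmem q) hpq
  have hn : (n : ℝ) ≠ 0 := Nat.cast_ne_zero.mpr p.pos.ne'
  field_simp at hangle
  exact Fin.ext (by exact_mod_cast (by linarith : (p : ℝ) = q))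

/-- The factor normalizing the `k`-th cosine wave to the `k`-th row of the DCT matrix. -/
def dctScale (n k : ℕ) : ℝ :=
  Real.sqrt ((2 - if k = 0 then 1 else 0) / n)

theorem dctMatrix_apply (k p : Fin n) : dctMatrix n k p = dctScale n k * cosWave n k p := by
  simp only [dctMatrix, dctScale, cosWave, of_apply, Int.cast_natCast]

theorem dctScale_pos (k : ℕ) (hn : n ≠ 0) : 0 < dctScale n k := by
  refine Real.sqrt_pos.mpr (div_pos ?_ (by positivity))
  split_ifs <;> norm_num

theorem dctMatrix_zero_pos (k : Fin n) : 0 < dctMatrix n k ⟨0, k.pos⟩ := by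
  rw [dctMatrix_apply]
  exact mul_pos (dctScale_pos k k.pos.ne') (cosWave_zero_pos k.isLt)

theorem isUnit_dctMatrix : IsUnit (dctMatrix n) := by
  have hfactor : dctMatrix n = diagonal (fun k : Fin n => dctScale n k) *
      Matrix.of fun k p : Fin n => (Polynomial.Chebyshev.chebyshevTsequence ℝ k).eval
        (Real.cos ((2 * p + 1) * Real.pi / (2 * n))) := by
    ext k p
    rw [diagonal_mul, of_apply, Polynomial.Chebyshev.chebyshevTsequence,
      dctMatrix_apply, cosWave]
    simp only [Polynomial.Chebyshev.T_real_cos]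
    congr 2
    push_cast
    ring
  rw [hfactor]
  refine (isUnit_diagonal.mpr ?_).mul
    (isUnit_eval_polynomialSequence _ injective_cos_odd_mul_pi_div)
  exact Pi.isUnit_iff.mpr fun k => (dctScale_pos k k.pos.ne').ne'.isUnit

theorem isUnit_Wdiag : IsUnit (Wdiag n) :=
  isUnit_diagonal.mpr (Pi.isUnit_iff.mpr fun k => (dctMatrix_zero_pos k).ne'.isUnit)

theorem isUnit_one_add_upshift : IsUnit (1 + upshift n) := by
  have htri : (1 + upshift n).BlockTriangular id := fun i j (hji : j < i) => by
    rw [Matrix.add_apply, one_apply_ne hji.ne', upshift, of_apply, if_neg (by omega), add_zero]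
  rw [isUnit_iff_isUnit_det, det_of_isUpperTriangular htri]
  simp [upshift]

theorem isUnit_transformM : IsUnit (transformM n) :=
  ((isUnit_nonsing_inv_iff.mpr isUnit_Wdiag).mul isUnit_dctMatrix).mul isUnit_one_add_upshift

theorem exists_dctMatrix_vecMul_thMat (v : Fin n → ℝ) (k : Fin n) :
    ∃ μ : ℝ, dctMatrix n k ᵥ* thMat v = μ • dctMatrix n k := by
  refine ⟨∑ x ∈ Finset.range (2 * n), Real.cos (k * x * Real.pi / n) * evenExt v x, ?_⟩
  ext q
  simp only [vecMul, dotProduct, dctMatrix_apply, mul_assoc, ← Finset.mul_sum,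
    sum_cosWave_mul_thMat, Pi.smul_apply, smul_eq_mul]
  ring

theorem Wdiag_mul_transformM : Wdiag n * transformM n = dctMatrix n * (1 + upshift n) := by
  rw [transformM, Matrix.mul_assoc,
    mul_nonsing_inv_cancel_left _ _ ((isUnit_iff_isUnit_det _).mp isUnit_Wdiag)]

theorem dctMatrix_mul_transformM_mulVec (v : Fin n → ℝ) (k : Fin n) :
    dctMatrix n k ⟨0, k.pos⟩ * (transformM n *ᵥ v) k =
      (dctMatrix n k ᵥ* thMat v) ⟨0, k.pos⟩ := by
  calc dctMatrix n k ⟨0, k.pos⟩ * (transformM n *ᵥ v) k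
    _ = (Wdiag n *ᵥ (transformM n *ᵥ v)) k := by rw [Wdiag, mulVec_diagonal]
    _ = (dctMatrix n *ᵥ ((1 + upshift n) *ᵥ v)) k := by
      rw [mulVec_mulVec, Wdiag_mul_transformM, ← mulVec_mulVec]
    _ = (dctMatrix n k ᵥ* thMat v) ⟨0, k.pos⟩ :=
      congrArg (dctMatrix n k ⬝ᵥ ·) (funext (one_add_upshift_mulVec v))

theorem dctMatrix_mul_thMat (v : Fin n → ℝ) :
    dctMatrix n * thMat v = diagonal (transformM n *ᵥ v) * dctMatrix n := by
  ext k q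
  obtain ⟨μ, hμ⟩ := exists_dctMatrix_vecMul_thMat v k
  have hμ_eq : (transformM n *ᵥ v) k = μ := by
    refine mul_left_cancel₀ (dctMatrix_zero_pos k).ne' ?_
    rw [dctMatrix_mul_transformM_mulVec, hμ, Pi.smul_apply, smul_eq_mul, mul_comm]
  rw [diagonal_mul, hμ_eq]
  exact congrFun hμ q

theorem thMat_eq_sum_mul_iff {ι : Type*} [Fintype ι] (u : Fin n → ℝ) (v w : ι → Fin n → ℝ) :
    thMat u = ∑ l, thMat (v l) * thMat (w l) ↔
      transformM n *ᵥ u = ∑ l, (transformM n *ᵥ v l) * (transformM n *ᵥ w l) := by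
  have hprod (l : ι) : dctMatrix n * (thMat (v l) * thMat (w l)) =
      diagonal ((transformM n *ᵥ v l) * (transformM n *ᵥ w l)) * dctMatrix n := by
    rw [← Matrix.mul_assoc, dctMatrix_mul_thMat, Matrix.mul_assoc, dctMatrix_mul_thMat,
      ← Matrix.mul_assoc, diagonal_mul_diagonal']
    rfl
  have hsum : dctMatrix n * ∑ l, thMat (v l) * thMat (w l) =
      diagonal (∑ l, (transformM n *ᵥ v l) * (transformM n *ᵥ w l)) * dctMatrix n := by
    simp only [Matrix.mul_sum, hprod, ← Matrix.sum_mul]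
    congr 1
    exact (map_sum (diagonalAddMonoidHom (Fin n) ℝ) _ _).symm
  rw [← isUnit_dctMatrix.mul_right_inj, dctMatrix_mul_thMat, hsum,
    isUnit_dctMatrix.mul_left_inj, diagonal_injective.eq_iff]

end Transform

section Tensors

variable {n1 n2 m n3 : ℕ}

theorem tmat_apply (A : Fin n3 → Matrix (Fin n1) (Fin n2) ℝ) (p q : Fin n3) (i : Fin n1)
    (j : Fin n2) : tmat A (p, i) (q, j) = thMat (fun k => A k i j) p q := by
  simp only [tmat, thMat, of_apply, Matrix.add_apply, hankelPart]
  split_ifs <;> rfl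

theorem tSlice_apply (A : Fin n3 → Matrix (Fin n1) (Fin n2) ℝ) (p : Fin n3) (i : Fin n1)
    (j : Fin n2) : tSlice A p i j = (transformM n3 *ᵥ fun k => A k i j) p := by
  simp only [tSlice, Matrix.sum_apply, Matrix.smul_apply, smul_eq_mul, mulVec, dotProduct]

theorem tmat_mul_tmat_apply (A : Fin n3 → Matrix (Fin n1) (Fin n2) ℝ)
    (B : Fin n3 → Matrix (Fin n2) (Fin m) ℝ) (p q : Fin n3) (i : Fin n1) (j : Fin m) :
    (tmat A * tmat B) (p, i) (q, j) =
      (∑ l, thMat (fun k => A k i l) * thMat (fun k => B k l j)) p q := by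
  simp only [Matrix.mul_apply, Fintype.sum_prod_type_right, Matrix.sum_apply, tmat_apply]

theorem tmat_eq_mul_iff (A : Fin n3 → Matrix (Fin n1) (Fin n2) ℝ)
    (B : Fin n3 → Matrix (Fin n2) (Fin m) ℝ) (C : Fin n3 → Matrix (Fin n1) (Fin m) ℝ) :
    tmat C = tmat A * tmat B ↔ ∀ p, tSlice C p = tSlice A p * tSlice B p := by
  calc tmat C = tmat A * tmat B
    _ ↔ ∀ i j, thMat (fun k => C k i j) =
          ∑ l, thMat (fun k => A k i l) * thMat (fun k => B k l j) := by
      simp only [← Matrix.ext_iff, Prod.forall, tmat_apply, tmat_mul_tmat_apply]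
      exact ⟨fun h i j p q => h p i q j, fun h p i q j => h i j p q⟩
    _ ↔ ∀ p, tSlice C p = tSlice A p * tSlice B p := by
      simp only [thMat_eq_sum_mul_iff, funext_iff, Finset.sum_apply, Pi.mul_apply,
        ← Matrix.ext_iff (n := Fin m), Matrix.mul_apply, tSlice_apply]
      exact ⟨fun h p i j => h i j p, fun h i j p => h p i j⟩

theorem tSlice_tubeSMul (a : Fin n3 → ℝ) (A : Fin n3 → Matrix (Fin n1) (Fin n2) ℝ) (p : Fin n3) :
    tSlice (tubeSMul a A) p = (transformM n3 *ᵥ a) p • tSlice A p := by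
  ext i j
  have htube : (fun k => tubeSMul a A k i j) =
      (transformM n3)⁻¹ *ᵥ fun s => (transformM n3 *ᵥ a) s * tSlice A s i j := by
    ext k
    simp only [tubeSMul, Matrix.sum_apply, Matrix.smul_apply, smul_eq_mul, mulVec, dotProduct]
  rw [tSlice_apply, htube, mulVec_mulVec,
    mul_nonsing_inv _ ((isUnit_iff_isUnit_det _).mp isUnit_transformM), one_mulVec,
    Matrix.smul_apply, smul_eq_mul]

end Tensors

/-- tube scalars commute with the c-product: for every tube `a`, every `A` and
every `B`, one has `A ⋆_c (a ⊛ B) = a ⊛ (A ⋆_c B) = (a ⊛ A) ⋆_c B`, where `A ⋆_c B` is the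
unique tensor `C` with `mat(C) = mat(A)·mat(B)`. -/
theorem tube_commutes_cProd {n1 n2 m n3 : ℕ} (a : Fin n3 → ℝ)
    (A : Fin n3 → Matrix (Fin n1) (Fin n2) ℝ) (B : Fin n3 → Matrix (Fin n2) (Fin m) ℝ)
    (C : Fin n3 → Matrix (Fin n1) (Fin m) ℝ) (hC : tmat C = tmat A * tmat B) :
    tmat A * tmat (tubeSMul a B) = tmat (tubeSMul a C) ∧
    tmat (tubeSMul a A) * tmat B = tmat (tubeSMul a C) := by
  have hslice := (tmat_eq_mul_iff A B C).mp hC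
  constructor
  · refine ((tmat_eq_mul_iff _ _ _).mpr fun p => ?_).symm
    rw [tSlice_tubeSMul, tSlice_tubeSMul, hslice, Matrix.mul_smul]
  · refine ((tmat_eq_mul_iff _ _ _).mpr fun p => ?_).symm
    rw [tSlice_tubeSMul, tSlice_tubeSMul, hslice, Matrix.smul_mul]

end
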